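/- arXiv:2512.12237 — 9 statements merged into one kernel-verified Lean document; each statement's English description precedes it below -/
import Mathlib

section
/- Let W be a linear subspace of the Cartan subalgebra 𝔱. Then the normalizer of W in 𝔤 equals the centralizer of W in 𝔤, i.e. {x ∈ 𝔤 : [x, W] ⊆ W} = {x ∈ 𝔤 : [x, W] = 0}. -/
/-!
If `x` normalizes `W` and `w ∈ W`, then `⁅x, w⁆` lies in the Cartan subalgebra, which is abelian,
so `(ad w)² x = 0`. Elements of a Cartan subalgebra are ad-semisimple, hence `(ad w)² x = 0`
already forces `ad w x = 0`. Both facts hold since a simple Lie algebra in characteristic zero has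
nondegenerate Killing form.
-/

/-!
STATEMENT 0: Let `W` be a linear subspace of the Cartan subalgebra `𝔱` of a
finite-dimensional simple complex Lie algebra `𝔤`.  Then the normalizer
`𝔫_𝔤(W) = {x ∈ 𝔤 : [x, W] ⊆ W}` equals the centralizer
`𝔠_𝔤(W) = {x ∈ 𝔤 : [x, W] = 0}`.
-/

open LieAlgebra

variable {L : Type*} [LieRing L] [LieAlgebra ℂ L]

/-- The normalizer `𝔫_𝔤(W) = {x ∈ 𝔤 : [x, W] ⊆ W}` of a subspace `W` of a Lie algebra. -/
def lieNormalizer (W : Submodule ℂ L) : Submodule ℂ L where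
  carrier := {x : L | ∀ w ∈ W, ⁅x, w⁆ ∈ W}
  add_mem' := by
    intro a b ha hb w hw
    rw [add_lie]
    exact W.add_mem (ha w hw) (hb w hw)
  zero_mem' := by
    intro w hw
    rw [zero_lie]
    exact W.zero_mem
  smul_mem' := by
    intro c a ha w hw
    rw [smul_lie]
    exact W.smul_mem c (ha w hw)

/-- The centralizer `𝔠_𝔤(W) = {x ∈ 𝔤 : [x, W] = 0}` of a subspace `W` of a Lie algebra. -/
def lieCentralizer (W : Submodule ℂ L) : Submodule ℂ L where
  carrier := {x : L | ∀ w ∈ W, ⁅x, w⁆ = 0}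
  add_mem' := by
    intro a b ha hb w hw
    rw [add_lie, ha w hw, hb w hw, add_zero]
  zero_mem' := by
    intro w hw
    rw [zero_lie]
  smul_mem' := by
    intro c a ha w hw
    rw [smul_lie, ha w hw, smul_zero]

theorem normalizer_eq_centralizer_of_le_cartan
    [FiniteDimensional ℂ L] [LieAlgebra.IsSimple ℂ L]
    (H : LieSubalgebra ℂ L) [H.IsCartanSubalgebra]
    (W : Submodule ℂ L) (hW : W ≤ H.toSubmodule) :
    lieNormalizer W = lieCentralizer W := by
  ext x
  refine ⟨fun hx w hw ↦ ?_, fun hx w hw ↦ by simp [hx w hw]⟩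
  have hwH : w ∈ H := hW hw
  have hxwH : ⁅x, w⁆ ∈ H := hW (hx w hw)
  -- `H` is abelian because the Killing form is nondegenerate (Cartan's criterion).
  have h_comm : ⁅w, ⁅x, w⁆⁆ = 0 :=
    congrArg Subtype.val (trivial_lie_zero H H ⟨w, hwH⟩ ⟨⁅x, w⁆, hxwH⟩)
  have h_sq : x ∈ (ad ℂ L w).maxGenEigenspace 0 := by
    rw [Module.End.mem_maxGenEigenspace]
    refine ⟨2, ?_⟩
    rw [zero_smul, sub_zero, pow_two, Module.End.mul_apply, ad_apply, ad_apply,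
      ← lie_skew w x, lie_neg, h_comm, neg_zero]
  rw [(IsKilling.isSemisimple_ad_of_mem_isCartanSubalgebra
    hwH).isFinitelySemisimple.maxGenEigenspace_eq_eigenspace,
    Module.End.mem_eigenspace_iff, zero_smul, ad_apply] at h_sq
  rw [← lie_skew, h_sq, neg_zero]
end

section
/- Let 𝒮 be a countable collection of linear subspaces of the Cartan subalgebra 𝔱. Then the set of 𝔱-stable Lie subalgebras 𝔩 of 𝔤 (i.e. Lie subalgebras with [𝔱, 𝔩] ⊆ 𝔩) such that 𝔩 ∩ 𝔱 belongs to 𝒮 is countable. -/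
/-!
A `𝔱`-stable subspace `V` is an `𝔱`-submodule of `𝔤`, so it is the sum of its intersections with
the weight spaces of `𝔤`. The zero weight space is `𝔱` itself, and by Cartan's criterion `𝔤` has
nondegenerate Killing form, so the other weight spaces are lines, each of which is either contained
in `V` or meets it trivially. Hence `V` is determined by `V ∩ 𝔱` together with the set of weights
whose weight space lies in `V` (`IsTStable.le_of_weights`). There are countably many choices for the
former and finitely many for the latter.
-/

/-! STATEMENT 2: if `𝒮` is a countable collection of subspaces of the Cartan subalgebra `𝔱`,
then the set of `𝔱`-stable Lie subalgebras `𝔩 ⊆ 𝔤` with `𝔩 ∩ 𝔱 ∈ 𝒮` is countable. -/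

open LieAlgebra

variable {L : Type*} [LieRing L] [LieAlgebra ℂ L]

/-- The centralizer `𝔠_𝔤(s) := 𝔠_𝔤(ℂs)` of an element `s` of a Lie algebra. -/
def lieCentralizerElt (s : L) : Submodule ℂ L :=
  lieCentralizer (Submodule.span ℂ {s})

/-- A subspace `V ⊆ 𝔤` is `𝔱`-stable if `[𝔱, V] ⊆ V`. -/
def IsTStable (H : LieSubalgebra ℂ L) (V : Submodule ℂ L) : Prop :=
  ∀ t ∈ H, ∀ v ∈ V, ⁅t, v⁆ ∈ V

/-- The subspace `[A, B]` of a Lie algebra spanned by all brackets `⁅a, b⁆`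
with `a ∈ A`, `b ∈ B`. -/
def bracketSpan (A B : Submodule ℂ L) : Submodule ℂ L :=
  Submodule.span ℂ {x : L | ∃ a ∈ A, ∃ b ∈ B, ⁅a, b⁆ = x}

/-- The `𝔱`-submodule of `𝔤` underlying a `𝔱`-stable subspace. -/
def IsTStable.toLieSubmodule {H : LieSubalgebra ℂ L} {V : Submodule ℂ L} (hV : IsTStable H V) :
    LieSubmodule ℂ H L :=
  { V with lie_mem := fun {t v} hv => hV t t.2 v hv }

/-- A `𝔱`-stable subspace `V` is controlled by `V ∩ 𝔱` and the weight spaces it contains. -/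
lemma IsTStable.le_of_weights [FiniteDimensional ℂ L] [LieAlgebra.IsKilling ℂ L]
    {H : LieSubalgebra ℂ L} [H.IsCartanSubalgebra] {V W : Submodule ℂ L} (hV : IsTStable H V)
    (hH : V ⊓ H.toSubmodule ≤ W)
    (hroot : ∀ χ : LieModule.Weight ℂ H L, (rootSpace H χ).toSubmodule ≤ V →
      (rootSpace H χ).toSubmodule ≤ W) :
    V ≤ W := by
  have key := congrArg LieSubmodule.toSubmodule
    (LieModule.eq_iSup_inf_genWeightSpace ℂ H L hV.toLieSubmodule)
  rw [LieSubmodule.iSup_toSubmodule] at key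
  change V = _ at key
  rw [key]
  refine iSup_le fun χ => ?_
  rw [LieSubmodule.inf_toSubmodule]
  change V ⊓ (rootSpace H χ).toSubmodule ≤ W
  by_cases hχ : χ.IsZero
  · refine le_trans (inf_le_inf_left V ?_) hH
    rw [show rootSpace H χ = H.toLieSubmodule by ext; simp [hχ.eq]]
    exact le_rfl
  · by_cases h : (rootSpace H χ).toSubmodule ≤ V
    · exact inf_le_right.trans (hroot χ h)
    · have ha : IsAtom (rootSpace H χ).toSubmodule :=
        Submodule.isAtom_iff_finrank_eq_one.mpr (IsKilling.finrank_rootSpace_eq_one χ hχ)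
      rw [(ha.not_le_iff_disjoint.mp h).symm.eq_bot]
      exact bot_le

theorem countable_tStable_subalgebras
    [FiniteDimensional ℂ L] [LieAlgebra.IsSimple ℂ L]
    (H : LieSubalgebra ℂ L) [H.IsCartanSubalgebra]
    (𝒮 : Set (Submodule ℂ L)) (h𝒮sub : ∀ W ∈ 𝒮, W ≤ H.toSubmodule)
    (h𝒮count : 𝒮.Countable) :
    {𝔩 : LieSubalgebra ℂ L | IsTStable H 𝔩.toSubmodule ∧
      𝔩.toSubmodule ⊓ H.toSubmodule ∈ 𝒮}.Countable := by
  let f : LieSubalgebra ℂ L → Submodule ℂ L × Set (LieModule.Weight ℂ H L) := fun 𝔩 =>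
    (𝔩.toSubmodule ⊓ H.toSubmodule, {χ | (rootSpace H χ).toSubmodule ≤ 𝔩.toSubmodule})
  refine Set.MapsTo.countable_of_injOn (f := f) (t := 𝒮 ×ˢ Set.univ)
    (fun 𝔩 h𝔩 => ⟨h𝔩.2, Set.mem_univ _⟩) ?_ (h𝒮count.prod Set.finite_univ.countable)
  intro 𝔞 h𝔞 𝔟 h𝔟 hab
  obtain ⟨h₁, h₂⟩ := Prod.mk.inj hab
  refine LieSubalgebra.toSubmodule_injective (le_antisymm ?_ ?_)
  · exact h𝔞.1.le_of_weights (h₁.le.trans inf_le_left) fun χ hχ => h₂.le hχ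
  · exact h𝔟.1.le_of_weights (h₁.ge.trans inf_le_left) fun χ hχ => h₂.ge hχ
end

section
/- Let 𝔥 ⊆ 𝔤 be a Lie subalgebra with 𝔱 ⊆ 𝔫_𝔤(𝔥), and let s ∈ 𝔥 ∩ 𝔱. Then 𝔫_𝔤(𝔥) ⊆ 𝔥 + 𝔠_𝔤(s). If moreover 𝔠_𝔤(s) ⊆ 𝔫_𝔤(𝔥), then 𝔫_𝔤(𝔥) = 𝔥 + 𝔠_𝔤(s). -/
/-!
Since `𝔤` is simple over `ℂ`, `ad s` is a semisimple endomorphism for every `s ∈ 𝔱`. As `s ∈ 𝔥`, the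
subspace `𝔥` is `ad s`-stable, so it has an `ad s`-stable complement `q`. Write `x ∈ 𝔫_𝔤(𝔥)` as
`a + b` with `a ∈ 𝔥` and `b ∈ q`. Then `[s, b] = [s, x] - [s, a]` lies in `𝔥 ∩ q = 0`, that is,
`b ∈ 𝔠_𝔤(s)`. The equality then follows from `𝔥 ⊆ 𝔫_𝔤(𝔥)`.
-/

/-! STATEMENT 4: if `𝔥 ⊆ 𝔤` is a Lie subalgebra with `𝔱 ⊆ 𝔫_𝔤(𝔥)` and `s ∈ 𝔥 ∩ 𝔱`, then
`𝔫_𝔤(𝔥) ⊆ 𝔥 + 𝔠_𝔤(s)`; if moreover `𝔠_𝔤(s) ⊆ 𝔫_𝔤(𝔥)` then `𝔫_𝔤(𝔥) = 𝔥 + 𝔠_𝔤(s)`. -/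

open LieAlgebra

variable {L : Type*} [LieRing L] [LieAlgebra ℂ L]

theorem normalizer_le_sup_centralizer
    [FiniteDimensional ℂ L] [LieAlgebra.IsSimple ℂ L]
    (H : LieSubalgebra ℂ L) [H.IsCartanSubalgebra]
    (𝔥 : LieSubalgebra ℂ L) (hn : H.toSubmodule ≤ lieNormalizer 𝔥.toSubmodule)
    (s : L) (hs𝔥 : s ∈ 𝔥) (hs𝔱 : s ∈ H) :
    lieNormalizer 𝔥.toSubmodule ≤ 𝔥.toSubmodule ⊔ lieCentralizerElt s ∧
    (lieCentralizerElt s ≤ lieNormalizer 𝔥.toSubmodule →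
      lieNormalizer 𝔥.toSubmodule = 𝔥.toSubmodule ⊔ lieCentralizerElt s) := by
  -- Cartan's criterion makes the Killing form nondegenerate, whence `ad s` is semisimple.
  have hss : (ad ℂ L s).IsSemisimple :=
    IsKilling.isSemisimple_ad_of_mem_isCartanSubalgebra hs𝔱
  obtain ⟨q, hq, hc⟩ := Module.End.isSemisimple_iff.mp hss 𝔥.toSubmodule
    (fun x hx => 𝔥.lie_mem hs𝔥 hx)
  have key : lieNormalizer 𝔥.toSubmodule ≤ 𝔥.toSubmodule ⊔ lieCentralizerElt s := by
    intro x hx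
    obtain ⟨a, ha, b, hb, rfl⟩ :=
      Submodule.mem_sup.mp (hc.sup_eq_top ▸ Submodule.mem_top : x ∈ 𝔥.toSubmodule ⊔ q)
    refine Submodule.add_mem_sup ha ?_
    have h1 : ⁅s, a + b⁆ ∈ 𝔥.toSubmodule := by
      rw [← lie_skew]
      exact neg_mem (hx s hs𝔥)
    have h2 : ⁅s, b⁆ ∈ 𝔥.toSubmodule := by
      have h3 := sub_mem h1 (𝔥.lie_mem hs𝔥 ha)
      rwa [lie_add, add_sub_cancel_left] at h3
    have h4 : ⁅s, b⁆ = 0 := Submodule.disjoint_def.mp hc.disjoint _ h2 (hq hb)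
    intro w hw
    obtain ⟨c, rfl⟩ := Submodule.mem_span_singleton.mp hw
    rw [lie_smul, ← lie_skew, h4, neg_zero, smul_zero]
  exact ⟨key, fun h => le_antisymm key (sup_le (fun x hx w hw => 𝔥.lie_mem hx hw) h)⟩
end

section
/- Let 𝔥 ⊆ 𝔤 be a Lie subalgebra with 𝔱 ⊆ 𝔫_𝔤(𝔥), and let s ∈ 𝔥 ∩ 𝔱. (a) Every root α ∈ Φ with 𝔤_α ⊆ 𝔫_𝔤(𝔥) satisfies 𝔤_α ⊆ 𝔥 or α(s) = 0. (b) If moreover 𝔠_𝔤(s) ⊆ 𝔫_𝔤(𝔥), then every root α with 𝔤_α ⊄ 𝔫_𝔤(𝔥) satisfies α(s) ≠ 0, equivalently [𝔤_α, s] = 𝔤_α. -/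
/-! STATEMENT 5: let `𝔥 ⊆ 𝔤` be a Lie subalgebra with `𝔱 ⊆ 𝔫_𝔤(𝔥)` and `s ∈ 𝔥 ∩ 𝔱`.
(a) Every root `α` with `𝔤_α ⊆ 𝔫_𝔤(𝔥)` satisfies `𝔤_α ⊆ 𝔥` or `α(s) = 0`.
(b) If moreover `𝔠_𝔤(s) ⊆ 𝔫_𝔤(𝔥)`, then every root `α` with `𝔤_α ⊄ 𝔫_𝔤(𝔥)`
satisfies `α(s) ≠ 0`. -/

open LieAlgebra

variable {L : Type*} [LieRing L] [LieAlgebra ℂ L]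

theorem root_of_normalizer_mem_or_vanishes
    [FiniteDimensional ℂ L] [LieAlgebra.IsSimple ℂ L]
    (H : LieSubalgebra ℂ L) [H.IsCartanSubalgebra]
    (𝔥 : LieSubalgebra ℂ L) (hn : H.toSubmodule ≤ lieNormalizer 𝔥.toSubmodule)
    (s : H) (hs : (s : L) ∈ 𝔥)
    (α : H → ℂ) (hα0 : α ≠ 0) (hαroot : rootSpace H α ≠ ⊥) :
    ((rootSpace H α).toSubmodule ≤ lieNormalizer 𝔥.toSubmodule →
      (rootSpace H α).toSubmodule ≤ 𝔥.toSubmodule ∨ α s = 0) ∧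
    (lieCentralizerElt (s : L) ≤ lieNormalizer 𝔥.toSubmodule →
      ¬ (rootSpace H α).toSubmodule ≤ lieNormalizer 𝔥.toSubmodule →
      α s ≠ 0) := by
  -- `L` is Killing by Cartan's criterion, so `H` acts on `rootSpace H α` by honest eigenvalues,
  -- although `rootSpace` is defined by generalized ones.
  have key : ∀ x ∈ rootSpace H α, ⁅(s : L), x⁆ = α s • x := fun x hx =>
    LieAlgebra.IsKilling.lie_eq_smul_of_mem_rootSpace hx s
  refine ⟨fun hN => ?_, fun hc hN h0 => hN fun x hx => hc ?_⟩
  · by_cases h0 : α s = 0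
    · exact Or.inr h0
    · refine Or.inl fun x hx => ?_
      -- `α s • x = -⁅x, s⁆` lies in `𝔥`, because `x` normalizes `𝔥` and `s ∈ 𝔥`.
      have h1 : ⁅x, (s : L)⁆ ∈ 𝔥.toSubmodule := hN hx s hs
      have h2 : α s • x ∈ 𝔥.toSubmodule := by
        rw [← key x hx, ← lie_skew]
        exact 𝔥.toSubmodule.neg_mem h1
      exact (𝔥.toSubmodule.smul_mem_iff h0).mp h2
  · -- If `α s = 0`, every root vector for `α` centralizes `s`.
    intro w hw
    obtain ⟨c, rfl⟩ := Submodule.mem_span_singleton.mp hw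
    rw [lie_smul, ← lie_skew, key x hx, h0, zero_smul, neg_zero, smul_zero]
end

section
/- Let 𝔥 ⊆ 𝔤 be a Lie subalgebra with 𝔱 ⊆ 𝔫_𝔤(𝔥), and let s ∈ 𝔥 ∩ 𝔱 be such that 𝔠_𝔤(s) ⊆ 𝔫_𝔤(𝔥). Then 𝔠_𝔤(𝔥 ∩ 𝔱) ⊆ 𝔠_𝔤(s) ⊆ 𝔥 + 𝔠_𝔤(𝔥 ∩ 𝔱). -/
/-!
The first inclusion holds because `s ∈ 𝔥 ∩ 𝔱`. For the second, `𝔠_𝔤(s)` is `𝔱`-stable (as `𝔱` is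
abelian), hence is the sum of its intersections with the root spaces `𝔤_α`, where `𝔤_0 = 𝔱`; this is
`LieModule.eq_iSup_inf_genWeightSpace` applied to `centralizerLieSubmodule`. Take
`x ∈ 𝔠_𝔤(s) ∩ 𝔤_α`. If `α` vanishes on `𝔥 ∩ 𝔱`, then `x` centralizes `𝔥 ∩ 𝔱`. Otherwise some
`t ∈ 𝔥 ∩ 𝔱` has `α(t) ≠ 0`, and since `x` normalizes `𝔥`, `α(t) x = [t, x] ∈ 𝔥`, so `x ∈ 𝔥`.
-/

/-! STATEMENT 6: let `𝔥 ⊆ 𝔤` be a Lie subalgebra with `𝔱 ⊆ 𝔫_𝔤(𝔥)` and `s ∈ 𝔥 ∩ 𝔱` with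
`𝔠_𝔤(s) ⊆ 𝔫_𝔤(𝔥)`.  Then `𝔠_𝔤(𝔥 ∩ 𝔱) ⊆ 𝔠_𝔤(s) ⊆ 𝔥 + 𝔠_𝔤(𝔥 ∩ 𝔱)`. -/

open LieAlgebra

variable {L : Type*} [LieRing L] [LieAlgebra ℂ L]

lemma mem_lieCentralizerElt_iff {s x : L} : x ∈ lieCentralizerElt s ↔ ⁅x, s⁆ = 0 := by
  refine ⟨fun h => h s (Submodule.mem_span_singleton_self s), fun h w hw => ?_⟩
  obtain ⟨c, rfl⟩ := Submodule.mem_span_singleton.mp hw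
  rw [lie_smul, h, smul_zero]

/-- The centralizer of an element `s` of an abelian subalgebra `H`, as an `H`-submodule of the
ambient Lie algebra under the adjoint action. -/
def centralizerLieSubmodule (H : LieSubalgebra ℂ L) [IsLieAbelian H] (s : L) (hs : s ∈ H) :
    LieSubmodule ℂ H L where
  __ := lieCentralizerElt s
  lie_mem := by
    intro t x hx
    have hx0 : ⁅x, s⁆ = 0 := mem_lieCentralizerElt_iff.mp hx
    have hts : ⁅(t : L), s⁆ = 0 :=
      congrArg Subtype.val (trivial_lie_zero H H t ⟨s, hs⟩)
    refine mem_lieCentralizerElt_iff.mpr ?_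
    rw [LieSubalgebra.coe_bracket_of_module, lie_lie, hx0, hts, lie_zero, lie_zero, sub_zero]

theorem centralizer_sandwich
    [FiniteDimensional ℂ L] [LieAlgebra.IsSimple ℂ L]
    (H : LieSubalgebra ℂ L) [H.IsCartanSubalgebra]
    (𝔥 : LieSubalgebra ℂ L) (hn : H.toSubmodule ≤ lieNormalizer 𝔥.toSubmodule)
    (s : L) (hs𝔥 : s ∈ 𝔥) (hs𝔱 : s ∈ H)
    (hcs : lieCentralizerElt s ≤ lieNormalizer 𝔥.toSubmodule) :
    lieCentralizer (𝔥.toSubmodule ⊓ H.toSubmodule) ≤ lieCentralizerElt s ∧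
    lieCentralizerElt s ≤
      𝔥.toSubmodule ⊔ lieCentralizer (𝔥.toSubmodule ⊓ H.toSubmodule) := by
  refine ⟨fun x hx => mem_lieCentralizerElt_iff.mpr (hx s ⟨hs𝔥, hs𝔱⟩), ?_⟩
  have hN := congrArg LieSubmodule.toSubmodule
    (LieModule.eq_iSup_inf_genWeightSpace ℂ H L (centralizerLieSubmodule H s hs𝔱))
  rw [LieSubmodule.iSup_toSubmodule] at hN
  change lieCentralizerElt s = _ at hN
  rw [hN]
  refine iSup_le fun α x hx => ?_
  obtain ⟨hxs, hxα⟩ : x ∈ lieCentralizerElt s ∧ x ∈ LieAlgebra.rootSpace H α := hx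
  have hroot (t : L) (ht : t ∈ H) : ⁅t, x⁆ = α ⟨t, ht⟩ • x :=
    LieAlgebra.IsKilling.lie_eq_smul_of_mem_rootSpace hxα ⟨t, ht⟩
  by_cases hα : ∀ t : H, (t : L) ∈ 𝔥 → α t = 0
  · refine Submodule.mem_sup_right fun t ht => ?_
    rw [← lie_skew, hroot t ht.2, hα ⟨t, ht.2⟩ ht.1, zero_smul, neg_zero]
  · push Not at hα
    obtain ⟨t, ht, hαt⟩ := hα
    refine Submodule.mem_sup_left ((Submodule.smul_mem_iff _ hαt).mp ?_)
    rw [← hroot t t.2, ← lie_skew]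
    exact neg_mem (hcs hxs t ht)
end

section
/- Let 𝔥 ⊆ 𝔤 be a Lie subalgebra with 𝔱 ⊆ 𝔫_𝔤(𝔥), and let s ∈ 𝔥 ∩ 𝔱 be such that 𝔠_𝔤(s) ⊆ 𝔫_𝔤(𝔥). Then 𝔫_𝔤(𝔥) = 𝔥 + 𝔠_𝔤(𝔥 ∩ 𝔱). -/
/-!
Since `𝔥 ⊆ 𝔫(𝔥)` and `𝔠(𝔥 ∩ 𝔱) ⊆ 𝔠(s) ⊆ 𝔫(𝔥)`, one inclusion is immediate. For the other,
`𝔫(𝔥)` is stable under `ad 𝔱` (the normalizer of a subalgebra is a subalgebra, and it contains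
`𝔱`), hence it is spanned by weight vectors of `𝔱`, on which `𝔱` acts by scalars because `ad t` is
semisimple for `t ∈ 𝔱`. Let `x ∈ 𝔫(𝔥)` have weight `χ`. If `χ` vanishes on `𝔥 ∩ 𝔱`, then
`x ∈ 𝔠(𝔥 ∩ 𝔱)`. Otherwise `χ(t) ≠ 0` for some `t ∈ 𝔥 ∩ 𝔱`, and `χ(t) x = [t, x] ∈ 𝔥` as `x`
normalizes `𝔥`, so `x ∈ 𝔥`.
-/

/-! STATEMENT 7: let `𝔥 ⊆ 𝔤` be a Lie subalgebra with `𝔱 ⊆ 𝔫_𝔤(𝔥)` and `s ∈ 𝔥 ∩ 𝔱` with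
`𝔠_𝔤(s) ⊆ 𝔫_𝔤(𝔥)`.  Then `𝔫_𝔤(𝔥) = 𝔥 + 𝔠_𝔤(𝔥 ∩ 𝔱)`. -/

open LieAlgebra

variable {L : Type*} [LieRing L] [LieAlgebra ℂ L]

/-- The normalizer of `W`, viewed as a module over a subalgebra `H` contained in it. -/
def normalizerLieSubmodule (H : LieSubalgebra ℂ L) (W : Submodule ℂ L)
    (hn : H.toSubmodule ≤ lieNormalizer W) : LieSubmodule ℂ H L where
  __ := lieNormalizer W
  lie_mem := by
    intro t x hx w hw
    rw [LieSubalgebra.coe_bracket_of_module, lie_lie]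
    exact W.sub_mem (hn t.2 _ (hx w hw)) (hx _ (hn t.2 w hw))

theorem normalizer_eq_sup_centralizer_inf_cartan
    [FiniteDimensional ℂ L] [LieAlgebra.IsSimple ℂ L]
    (H : LieSubalgebra ℂ L) [H.IsCartanSubalgebra]
    (𝔥 : LieSubalgebra ℂ L) (hn : H.toSubmodule ≤ lieNormalizer 𝔥.toSubmodule)
    (s : L) (hs𝔥 : s ∈ 𝔥) (hs𝔱 : s ∈ H)
    (hcs : lieCentralizerElt s ≤ lieNormalizer 𝔥.toSubmodule) :
    lieNormalizer 𝔥.toSubmodule =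
      𝔥.toSubmodule ⊔ lieCentralizer (𝔥.toSubmodule ⊓ H.toSubmodule) := by
  apply le_antisymm
  · let N := normalizerLieSubmodule H 𝔥.toSubmodule hn
    have htop := LieModule.iSup_genWeightSpace_eq_top ℂ H N
    intro x hx
    have hx' : (⟨x, hx⟩ : N) ∈ ⨆ χ : H → ℂ, LieModule.genWeightSpace N χ := by
      rw [htop]; trivial
    suffices ∀ y : N, y ∈ (⨆ χ : H → ℂ, LieModule.genWeightSpace N χ) →
        (y : L) ∈ 𝔥.toSubmodule ⊔ lieCentralizer (𝔥.toSubmodule ⊓ H.toSubmodule) from this _ hx'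
    intro y hy
    induction hy using LieSubmodule.iSup_induction' with
    | zero => exact Submodule.zero_mem _
    | add y z _ _ hy hz => exact Submodule.add_mem _ hy hz
    | mem χ y hy =>
      have hroot : (y : L) ∈ LieAlgebra.rootSpace H χ :=
        LieModule.map_genWeightSpace_le N.incl
          ((LieSubmodule.mem_map _).mpr ⟨y, hy, rfl⟩)
      have hsmul (t : H) : ⁅(t : L), (y : L)⁆ = χ t • (y : L) :=
        LieAlgebra.IsKilling.lie_eq_smul_of_mem_rootSpace hroot t
      by_cases hχ : ∀ t : H, (t : L) ∈ 𝔥 → χ t = 0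
      · refine Submodule.mem_sup_right fun w hw => ?_
        rw [← lie_skew, hsmul ⟨w, hw.2⟩, hχ ⟨w, hw.2⟩ hw.1, zero_smul, neg_zero]
      · push Not at hχ
        obtain ⟨t, ht, hne⟩ := hχ
        refine Submodule.mem_sup_left ?_
        have hmem : ⁅(y : L), (t : L)⁆ ∈ 𝔥.toSubmodule := y.2 t ht
        rw [← lie_skew, hsmul, neg_mem_iff] at hmem
        exact (Submodule.smul_mem_iff _ hne).mp hmem
  · refine sup_le (fun x hx w hw => 𝔥.lie_mem hx hw) fun x hx => hcs fun w hw => ?_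
    obtain ⟨c, rfl⟩ := Submodule.mem_span_singleton.mp hw
    rw [lie_smul, hx s ⟨hs𝔥, hs𝔱⟩, smul_zero]
end

section
/- Let 𝔥 ⊆ 𝔤 be a Lie subalgebra with 𝔱 ⊆ 𝔫_𝔤(𝔥), let s ∈ 𝔥 ∩ 𝔱 satisfy 𝔠_𝔤(s) ⊆ 𝔫_𝔤(𝔥), and let 𝔪 ⊆ 𝔤 be a 𝔱-stable subspace with 𝔤 = 𝔫_𝔤(𝔥) ⊕ 𝔪. Assume in addition that [𝔤, 𝔥] ⊆ 𝔥 + 𝔪. Then 𝔫_𝔤(𝔥) = 𝔥 + 𝔠_𝔤(𝔥) + 𝔱. -/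
/-!
The normalizer `𝔫` of `𝔥`, and `𝔥` itself, are stable under the Cartan subalgebra `𝔱`, hence are
spanned by weight vectors (`mem_of_weight_vectors`). So it suffices to show that a weight vector
`x ∈ 𝔫` of nonzero weight `χ` which is not in `𝔥` commutes with every weight vector `y ∈ 𝔥`.

* Since `[t, x] = χ(t) x ∈ 𝔥` for `t ∈ 𝔥 ∩ 𝔱`, the root `χ` vanishes on `𝔥 ∩ 𝔱`. This settles
  the case `y ∈ 𝔱`.
* If `𝔥` contains a nonzero root vector of weight `β`, then it contains the coroot of `β`
  (`coroot_mem_of_root_vector_mem`): the coroot lies in `[𝔤, 𝔥] ⊆ 𝔥 + 𝔪` and in `𝔱 ⊆ 𝔫`, and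
  `𝔫 ∩ (𝔥 + 𝔪) = 𝔥`.
* If `y` has root `β` and `[x, y] ≠ 0`, then `𝔥` contains root vectors of weights `β` and `χ + β`,
  so `χ` is orthogonal to both, hence to itself, which is absurd. (If `χ + β = 0`, then already
  `χ` orthogonal to `β` is absurd.)
-/

/-! STATEMENT 8: let `𝔥 ⊆ 𝔤` be a Lie subalgebra with `𝔱 ⊆ 𝔫_𝔤(𝔥)`, let `s ∈ 𝔥 ∩ 𝔱` satisfy
`𝔠_𝔤(s) ⊆ 𝔫_𝔤(𝔥)`, and let `𝔪 ⊆ 𝔤` be a `𝔱`-stable subspace with `𝔤 = 𝔫_𝔤(𝔥) ⊕ 𝔪`.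
Assume `[𝔤, 𝔥] ⊆ 𝔥 + 𝔪`.  Then `𝔫_𝔤(𝔥) = 𝔥 + 𝔠_𝔤(𝔥) + 𝔱`. -/

open LieAlgebra

variable {L : Type*} [LieRing L] [LieAlgebra ℂ L]

open LieModule LieAlgebra.IsKilling

section Helpers

variable [FiniteDimensional ℂ L] {H : LieSubalgebra ℂ L} [H.IsCartanSubalgebra]

/-- A `𝔱`-stable subspace `V` is contained in any subspace `W` that contains all the weight vectors
of `V`. -/
lemma mem_of_weight_vectors {V W : Submodule ℂ L} (hV : IsTStable H V)
    (h : ∀ (χ : Weight ℂ H L), ∀ x ∈ V, x ∈ rootSpace H χ → x ∈ W) : V ≤ W := by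
  let N : LieSubmodule ℂ H L := { V with lie_mem := fun {t m} hm => hV t t.2 m hm }
  have hN := congrArg LieSubmodule.toSubmodule (eq_iSup_inf_genWeightSpace ℂ H L N)
  have hNV : V = N.toSubmodule := rfl
  rw [hNV, hN]
  simp only [LieSubmodule.iSup_toSubmodule]
  exact iSup_le fun χ x hx => h χ x hx.1 hx.2

variable [LieAlgebra.IsKilling ℂ L]

/-- Orthogonality of two weights, expressed through coroots, is symmetric. -/
lemma apply_coroot_eq_zero_symm {α β : Weight ℂ H L} (h : β (coroot α) = 0) :
    α (coroot β) = 0 := by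
  have h_ker : coroot α ∈ β.ker := h
  change coroot β ∈ α.ker
  rw [← orthogonal_span_coroot_eq_ker,
    LinearMap.BilinForm.orthogonal_span_singleton_eq_toLin_ker, LinearMap.mem_ker]
  exact traceForm_eq_zero_of_mem_ker_of_mem_span_coroot h_ker (Submodule.mem_span_singleton_self _)

lemma coroot_mem_of_root_vector_mem
    {𝔥 : LieSubalgebra ℂ L} (hn : H.toSubmodule ≤ lieNormalizer 𝔥.toSubmodule)
    {𝔪 : Submodule ℂ L} (hdisj : Disjoint (lieNormalizer 𝔥.toSubmodule) 𝔪)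
    (hbr : ∀ x : L, ∀ y ∈ 𝔥, ⁅x, y⁆ ∈ 𝔥.toSubmodule ⊔ 𝔪)
    {β : Weight ℂ H L} (hβ : β.IsNonZero) {y : L} (hy𝔥 : y ∈ 𝔥) (hy : y ∈ rootSpace H β)
    (hy0 : y ≠ 0) : (coroot β : L) ∈ 𝔥 := by
  obtain ⟨h, e, f, ht, he, hf⟩ := exists_isSl2Triple_of_weight_isNonZero hβ
  have hcor := ht.h_eq_coroot hβ he hf
  -- root spaces are one-dimensional, so `e` is a multiple of `y`
  obtain ⟨c, hc⟩ := (finrank_eq_one_iff_of_nonzero' (⟨y, hy⟩ : rootSpace H β) (by simpa using hy0)).mp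
    (finrank_rootSpace_eq_one β hβ) ⟨e, he⟩
  have hce : c • y = e := congrArg Subtype.val hc
  have he𝔥 : e ∈ 𝔥 := hce ▸ 𝔥.smul_mem c hy𝔥
  have hmem : (coroot β : L) ∈ 𝔥.toSubmodule ⊔ 𝔪 := by
    rw [← hcor, ← ht.lie_e_f, ← lie_skew]
    exact Submodule.neg_mem _ (hbr f e he𝔥)
  obtain ⟨a, ha, b, hb, hab⟩ := Submodule.mem_sup.mp hmem
  have hbn : b ∈ lieNormalizer 𝔥.toSubmodule := by
    have hb' : b = (coroot β : L) - a := by rw [← hab]; abel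
    rw [hb']
    exact Submodule.sub_mem _ (hn (coroot β).2) (fun w hw => 𝔥.lie_mem ha hw)
  have hb0 : b = 0 := Submodule.disjoint_def.mp hdisj b hbn hb
  rw [← hab, hb0, add_zero]
  exact ha

end Helpers

theorem normalizer_eq_sup_centralizer_sup_cartan
    [FiniteDimensional ℂ L] [LieAlgebra.IsSimple ℂ L]
    (H : LieSubalgebra ℂ L) [H.IsCartanSubalgebra]
    (𝔥 : LieSubalgebra ℂ L) (hn : H.toSubmodule ≤ lieNormalizer 𝔥.toSubmodule)
    (s : L) (hs𝔥 : s ∈ 𝔥) (hs𝔱 : s ∈ H)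
    (hcs : lieCentralizerElt s ≤ lieNormalizer 𝔥.toSubmodule)
    (𝔪 : Submodule ℂ L) (h𝔪 : IsTStable H 𝔪)
    (hcompl : IsCompl (lieNormalizer 𝔥.toSubmodule) 𝔪)
    (hbr : ∀ x : L, ∀ y ∈ 𝔥, ⁅x, y⁆ ∈ 𝔥.toSubmodule ⊔ 𝔪) :
    lieNormalizer 𝔥.toSubmodule =
      𝔥.toSubmodule ⊔ lieCentralizer 𝔥.toSubmodule ⊔ H.toSubmodule := by
  have hH (x : L) (hx : x ∈ rootSpace H (0 : H → ℂ)) : x ∈ H := by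
    simpa [rootSpace_zero_eq] using hx
  have h𝔥n : 𝔥.toSubmodule ≤ lieNormalizer 𝔥.toSubmodule := fun a ha w hw => 𝔥.lie_mem ha hw
  apply le_antisymm
  · refine mem_of_weight_vectors (H := H) ?_ ?_
    · intro t ht x hx w hw
      rw [lie_lie]
      exact Submodule.sub_mem _ (hn ht _ (hx w hw)) (hx _ (hn ht w hw))
    intro χ x hxn hxχ
    by_cases hχ : χ.IsZero
    · exact Submodule.mem_sup_right (hH x (hχ.eq ▸ hxχ))
    by_cases hx𝔥 : x ∈ 𝔥
    · exact Submodule.mem_sup_left (Submodule.mem_sup_left hx𝔥)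
    refine Submodule.mem_sup_left (Submodule.mem_sup_right ?_)
    have hvan (t : H) (ht : (t : L) ∈ 𝔥) : χ t = 0 := by
      by_contra hne
      have h1 : ⁅x, (t : L)⁆ ∈ 𝔥 := hxn t ht
      have h2 : ⁅(t : L), x⁆ = χ t • x := lie_eq_smul_of_mem_rootSpace hxχ t
      rw [← lie_skew, h2] at h1
      exact hx𝔥 ((𝔥.toSubmodule.smul_mem_iff hne).mp ((𝔥.toSubmodule.neg_mem_iff).mp h1))
    have key : 𝔥.toSubmodule ≤ LinearMap.ker (LieAlgebra.ad ℂ L x : L →ₗ[ℂ] L) := by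
      refine mem_of_weight_vectors (H := H) (fun t ht v hv => hn ht v hv) ?_
      intro β y hy𝔥 hyβ
      rw [LinearMap.mem_ker, LieAlgebra.ad_apply]
      by_cases hβ : β.IsZero
      · have hyH : y ∈ H := hH y (hβ.eq ▸ hyβ)
        have h2 : ⁅y, x⁆ = χ ⟨y, hyH⟩ • x := lie_eq_smul_of_mem_rootSpace hxχ ⟨y, hyH⟩
        rw [← lie_skew, h2, hvan ⟨y, hyH⟩ hy𝔥, zero_smul, neg_zero]
      by_contra hne
      have hy0 : y ≠ 0 := fun h => hne (by rw [h, lie_zero])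
      have hχβ : χ (coroot β) = 0 :=
        hvan _ (coroot_mem_of_root_vector_mem hn hcompl.disjoint hbr hβ hy𝔥 hyβ hy0)
      have hβχ : β (coroot χ) = 0 := apply_coroot_eq_zero_symm hχβ
      have hz : ⁅x, y⁆ ∈ rootSpace H (χ + β : H → ℂ) :=
        lie_mem_genWeightSpace_of_mem_genWeightSpace hxχ hyβ
      let γ : Weight ℂ H L := ⟨χ + β, fun h => hne (by simpa [h] using hz)⟩
      have hγ (t : H) : γ t = χ t + β t := rfl
      have hγχ : γ (coroot χ) = 2 := by rw [hγ, hβχ, root_apply_coroot hχ, add_zero]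
      by_cases hγ0 : γ.IsZero
      · rw [hγ0.eq] at hγχ
        norm_num at hγχ
      · have hχγ : χ (coroot γ) = 0 :=
          hvan _ (coroot_mem_of_root_vector_mem hn hcompl.disjoint hbr hγ0 (hxn y hy𝔥) hz hne)
        rw [apply_coroot_eq_zero_symm hχγ] at hγχ
        norm_num at hγχ
    exact fun w hw => key hw
  · refine sup_le (sup_le h𝔥n ?_) hn
    intro x hx w hw
    rw [hx w hw]
    exact Submodule.zero_mem _
end

section
/- Let 𝔥 ⊆ 𝔤 be a Lie subalgebra with 𝔱 ⊆ 𝔫_𝔤(𝔥) such that 𝔥 ∩ 𝔱 = ℂs is one-dimensional (s ≠ 0), and let 𝔪 ⊆ 𝔤 be a 𝔱-stable subspace with 𝔤 = 𝔫_𝔤(𝔥) ⊕ 𝔪. Assume that [𝔤, 𝔥] ⊆ 𝔥 + 𝔪. Then for every root β ∈ Φ with 𝔤_β ⊆ 𝔥, one has [𝔤_β, 𝔤_{−β}] = ℂs. -/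
/-! For `a ∈ 𝔤_β ⊆ 𝔥` and `b ∈ 𝔤_{-β}`, the bracket `[a, b]` lies in `𝔤_0 = 𝔱`, hence in `𝔫_𝔤(𝔥)`.
It also lies in `[𝔤, 𝔥] ⊆ 𝔥 + 𝔪`; since `𝔥 ⊆ 𝔫_𝔤(𝔥)`, its `𝔪`-component lies in
`𝔫_𝔤(𝔥) ∩ 𝔪 = 0`, so `[a, b] ∈ 𝔥 ∩ 𝔱 = ℂs`. Equality with the line `ℂs` follows because an
`𝔰𝔩₂`-triple attached to `β` exhibits a nonzero bracket; such triples exist since a simple Lie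
algebra over `ℂ` has nondegenerate Killing form (Cartan's criterion). -/

open LieAlgebra

variable {L : Type*} [LieRing L] [LieAlgebra ℂ L]

theorem bracket_rootSpaces_eq_span_of_rootSpace_le
    [FiniteDimensional ℂ L] [LieAlgebra.IsSimple ℂ L]
    (H : LieSubalgebra ℂ L) [H.IsCartanSubalgebra]
    (𝔥 : LieSubalgebra ℂ L) (hn : H.toSubmodule ≤ lieNormalizer 𝔥.toSubmodule)
    (s : L) (hs0 : s ≠ 0)
    (h𝔥𝔱 : 𝔥.toSubmodule ⊓ H.toSubmodule = Submodule.span ℂ {s})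
    (𝔪 : Submodule ℂ L) (h𝔪 : IsTStable H 𝔪)
    (hcompl : IsCompl (lieNormalizer 𝔥.toSubmodule) 𝔪)
    (hbr : ∀ x : L, ∀ y ∈ 𝔥, ⁅x, y⁆ ∈ 𝔥.toSubmodule ⊔ 𝔪)
    (β : H → ℂ) (hβ0 : β ≠ 0) (hβroot : rootSpace H β ≠ ⊥)
    (hβ𝔥 : (rootSpace H β).toSubmodule ≤ 𝔥.toSubmodule) :
    bracketSpan (rootSpace H β).toSubmodule (rootSpace H (-β)).toSubmodule =
      Submodule.span ℂ {s} := by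
  have hbracket : ∀ a ∈ rootSpace H β, ∀ b ∈ rootSpace H (-β),
      ⁅a, b⁆ ∈ Submodule.span ℂ {s} := by
    intro a ha b hb
    have habH : ⁅a, b⁆ ∈ H := by
      have h := lie_mem_genWeightSpace_of_mem_genWeightSpace ha hb
      rw [add_neg_cancel] at h
      change _ ∈ rootSpace H 0 at h
      rw [rootSpace_zero_eq] at h
      exact h
    have hba : ⁅a, b⁆ ∈ 𝔥.toSubmodule ⊔ 𝔪 := by
      rw [← lie_skew]
      exact neg_mem (hbr b a (hβ𝔥 ha))
    obtain ⟨y, hy, m, hm, hym⟩ := Submodule.mem_sup.mp hba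
    have hyn : y ∈ lieNormalizer 𝔥.toSubmodule := fun w hw ↦ 𝔥.lie_mem hy hw
    have hmn : m ∈ lieNormalizer 𝔥.toSubmodule := by
      rw [← add_sub_cancel_left y m, hym]
      exact sub_mem (hn habH) hyn
    have hm0 : m = 0 := Submodule.disjoint_def.mp hcompl.disjoint m hmn hm
    rw [← h𝔥𝔱]
    refine ⟨?_, habH⟩
    rw [← hym, hm0, add_zero]
    exact hy
  let α : LieModule.Weight ℂ H L := ⟨β, hβroot⟩
  have hα : α.IsNonZero := fun h ↦ hβ0 h
  obtain ⟨h, e, f, ht, he, hf⟩ := IsKilling.exists_isSl2Triple_of_weight_isNonZero hα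
  apply le_antisymm
  · refine Submodule.span_le.mpr ?_
    rintro _ ⟨a, ha, b, hb, rfl⟩
    exact hbracket a ha b hb
  · obtain ⟨c, hc⟩ := Submodule.mem_span_singleton.mp (hbracket e he f hf)
    have hc0 : c ≠ 0 := by
      rintro rfl
      exact ht.h_ne_zero (by rw [← ht.lie_e_f, ← hc, zero_smul])
    rw [Submodule.span_singleton_le_iff_mem, ← Submodule.smul_mem_iff _ hc0, hc]
    exact Submodule.subset_span ⟨e, he, f, hf, rfl⟩
end

section
/- Let 𝔥 ⊆ 𝔤 be a Lie subalgebra with 𝔱 ⊆ 𝔫_𝔤(𝔥) such that 𝔥 ∩ 𝔱 = ℂs is one-dimensional (s ≠ 0) and dim 𝔥 ≥ 2, and let 𝔪 ⊆ 𝔤 be a 𝔱-stable subspace with 𝔤 = 𝔫_𝔤(𝔥) ⊕ 𝔪. Assume that [𝔤, 𝔥] ⊆ 𝔥 + 𝔪. Then there exists a root α ∈ Φ with ℂs = [𝔤_α, 𝔤_{−α}] such that 𝔥 equals one of the following: [𝔤_α, 𝔤_{−α}] ⊕ 𝔤_α, or [𝔤_α, 𝔤_{−α}] ⊕ 𝔤_{−α},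 or [𝔤_α, 𝔤_{−α}] ⊕ 𝔤_α ⊕ 𝔤_{−α}. -/
/-!
Write `𝔫` for the normalizer of `𝔥`. Since `𝔥` is stable under the Cartan subalgebra `H` and root
spaces are lines, `𝔥 = (𝔥 ∩ H) ⊕ ⨁_{β ∈ S} 𝔤_β` for a set `S` of roots
(`le_sup_iSup_rootSpace`), and `S` is nonempty because `dim 𝔥 ≥ 2 > dim (𝔥 ∩ H)`.

If `x ∈ H` lies in `𝔥 + 𝔪`, then its `𝔪`-component lies in `𝔫 ∩ 𝔪 = 0`, so `x ∈ 𝔥 ∩ H = ℂs`.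
For `β ∈ S`, the hypothesis `[𝔤, 𝔥] ⊆ 𝔥 + 𝔪` therefore puts `[𝔤_β, 𝔤_{-β}] ⊆ H` inside `ℂs`.
This bracket contains the nonzero element `t_β` dual to `β` under the Killing form, so
`[𝔤_β, 𝔤_{-β}] = ℂs`, and all `t_β` with `β ∈ S` are proportional. Hence so are all `β ∈ S`, and
`S ⊆ {α, -α}` for any `α ∈ S`, because `±α` are the only roots proportional to `α`.
-/

/-! STATEMENT 10: let `𝔥 ⊆ 𝔤` be a Lie subalgebra with `𝔱 ⊆ 𝔫_𝔤(𝔥)` such that `𝔥 ∩ 𝔱 = ℂs`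
is one-dimensional (`s ≠ 0`) and `dim 𝔥 ≥ 2`, and let `𝔪 ⊆ 𝔤` be a `𝔱`-stable subspace
with `𝔤 = 𝔫_𝔤(𝔥) ⊕ 𝔪`.  Assume `[𝔤, 𝔥] ⊆ 𝔥 + 𝔪`.  Then there is a root `α ∈ Φ` with
`ℂs = [𝔤_α, 𝔤_{−α}]` such that `𝔥` is one of `[𝔤_α, 𝔤_{−α}] ⊕ 𝔤_α`,
`[𝔤_α, 𝔤_{−α}] ⊕ 𝔤_{−α}`, or `[𝔤_α, 𝔤_{−α}] ⊕ 𝔤_α ⊕ 𝔤_{−α}`. -/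

open LieAlgebra

variable {L : Type*} [LieRing L] [LieAlgebra ℂ L]

open LieModule LieAlgebra.IsKilling in
/-- The element of the Cartan subalgebra dual to a root `β` lies in `[𝔤_β, 𝔤_{-β}]`. -/
lemma cartanEquivDual_symm_mem_bracketSpan [FiniteDimensional ℂ L] [LieAlgebra.IsKilling ℂ L]
    (H : LieSubalgebra ℂ L) [H.IsCartanSubalgebra] (β : Weight ℂ H L) :
    (((cartanEquivDual H).symm β.toLinear : H) : L) ∈
      bracketSpan (rootSpace H β).toSubmodule (rootSpace H (-β)).toSubmodule :=
  (mem_corootSpace _).mp (cartanEquivDual_symm_apply_mem_corootSpace β)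

open LieModule LieAlgebra.IsKilling in
/-- An `H`-submodule of `L` is contained in the sum of its intersection with `H` and of the root
spaces it contains. -/
lemma le_sup_iSup_rootSpace [FiniteDimensional ℂ L] [LieAlgebra.IsKilling ℂ L]
    (H : LieSubalgebra ℂ L) [H.IsCartanSubalgebra] (N : LieSubmodule ℂ H L) :
    N ≤ (N ⊓ H.toLieSubmodule) ⊔
      ⨆ (β : Weight ℂ H L) (_ : β.IsNonZero ∧ rootSpace H β ≤ N), rootSpace H β := by
  refine (eq_iSup_inf_genWeightSpace ℂ H L N).le.trans (iSup_le fun β ↦ ?_)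
  by_cases hβ : β.IsZero
  · rw [show genWeightSpace L (β : H → ℂ) = H.toLieSubmodule by ext; simp [hβ.eq]]
    exact le_sup_left
  by_cases h : rootSpace H β ≤ N
  · exact le_sup_of_le_right (le_iSup₂_of_le β ⟨hβ, h⟩ inf_le_right)
  -- A root space is a line, so one not contained in `N` meets `N` trivially.
  · have ha := Submodule.isAtom_iff_finrank_eq_one.mpr (finrank_rootSpace_eq_one β hβ)
    have : N ⊓ rootSpace H (β : H → ℂ) = ⊥ :=
      LieSubmodule.toSubmodule_injective ((ha.not_le_iff_disjoint.mp h).symm.eq_bot)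
    simp only [this, bot_le]

open LieModule LieAlgebra.IsKilling in
theorem subalgebra_eq_sl2_or_borel
    [FiniteDimensional ℂ L] [LieAlgebra.IsSimple ℂ L]
    (H : LieSubalgebra ℂ L) [H.IsCartanSubalgebra]
    (𝔥 : LieSubalgebra ℂ L) (hn : H.toSubmodule ≤ lieNormalizer 𝔥.toSubmodule)
    (s : L) (hs0 : s ≠ 0)
    (h𝔥𝔱 : 𝔥.toSubmodule ⊓ H.toSubmodule = Submodule.span ℂ {s})
    (hdim : 2 ≤ Module.finrank ℂ 𝔥)
    (𝔪 : Submodule ℂ L) (h𝔪 : IsTStable H 𝔪)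
    (hcompl : IsCompl (lieNormalizer 𝔥.toSubmodule) 𝔪)
    (hbr : ∀ x : L, ∀ y ∈ 𝔥, ⁅x, y⁆ ∈ 𝔥.toSubmodule ⊔ 𝔪) :
    ∃ α : H → ℂ, α ≠ 0 ∧ rootSpace H α ≠ ⊥ ∧
      Submodule.span ℂ {s} =
        bracketSpan (rootSpace H α).toSubmodule (rootSpace H (-α)).toSubmodule ∧
      (𝔥.toSubmodule =
          bracketSpan (rootSpace H α).toSubmodule (rootSpace H (-α)).toSubmodule ⊔
            (rootSpace H α).toSubmodule ∨
       𝔥.toSubmodule =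
          bracketSpan (rootSpace H α).toSubmodule (rootSpace H (-α)).toSubmodule ⊔
            (rootSpace H (-α)).toSubmodule ∨
       𝔥.toSubmodule =
          bracketSpan (rootSpace H α).toSubmodule (rootSpace H (-α)).toSubmodule ⊔
            (rootSpace H α).toSubmodule ⊔ (rootSpace H (-α)).toSubmodule) := by
  let N : LieSubmodule ℂ H L :=
    { 𝔥.toSubmodule with lie_mem := fun {x m} hm ↦ hn x.2 m hm }
  have hH : ∀ x ∈ H, x ∈ 𝔥.toSubmodule ⊔ 𝔪 → x ∈ Submodule.span ℂ {s} := by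
    intro x hx hx'
    obtain ⟨a, ha, b, hb, rfl⟩ := Submodule.mem_sup.mp hx'
    -- The `𝔪`-component `b` is a difference of elements normalizing `𝔥`.
    have hbn : b ∈ lieNormalizer 𝔥.toSubmodule := by
      have h1 := Submodule.sub_mem _ (hn hx) (fun w hw ↦ 𝔥.lie_mem ha hw :
        a ∈ lieNormalizer 𝔥.toSubmodule)
      simpa using h1
    have hb0 : b = 0 := Submodule.disjoint_def.mp hcompl.disjoint b hbn hb
    subst hb0
    rw [← h𝔥𝔱]
    exact ⟨by simpa using ha, hx⟩
  have hle : ∀ β : Weight ℂ H L, rootSpace H β ≤ N →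
      bracketSpan (rootSpace H β).toSubmodule (rootSpace H (-β)).toSubmodule ≤
        Submodule.span ℂ {s} := by
    intro β hβ
    refine Submodule.span_le.mpr ?_
    rintro _ ⟨a, ha, b, hb, rfl⟩
    refine hH _ ?_ ?_
    · have := lie_mem_genWeightSpace_of_mem_genWeightSpace ha hb
      rw [add_neg_cancel] at this
      exact (rootSpace_zero_eq ℂ L H).le this
    · rw [← lie_skew]
      exact Submodule.neg_mem _ (hbr b a (hβ ha))
  have hne : ∀ β : Weight ℂ H L, β.IsNonZero →
      (((cartanEquivDual H).symm β.toLinear : H) : L) ≠ 0 := by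
    intro β hβ h0
    rw [ZeroMemClass.coe_eq_zero, LinearEquiv.map_eq_zero_iff] at h0
    exact hβ (by ext x; exact LinearMap.congr_fun h0 x)
  -- `𝔥` is not contained in `H`, since `𝔥 ∩ H` is a line.
  obtain ⟨α, hα0, hα⟩ : ∃ α : Weight ℂ H L, α.IsNonZero ∧ rootSpace H α ≤ N := by
    by_contra! hcon
    have h1 : N ≤ N ⊓ H.toLieSubmodule := by
      refine (le_sup_iSup_rootSpace H N).trans (sup_le le_rfl ?_)
      exact iSup₂_le fun β hβ ↦ absurd hβ.2 (hcon β hβ.1)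
    have h2 : 𝔥.toSubmodule ≤ Submodule.span ℂ {s} := by
      rw [← h𝔥𝔱]
      exact fun x hx ↦ h1 hx
    have h3 := Submodule.finrank_mono h2
    rw [finrank_span_singleton hs0] at h3
    have h4 : 2 ≤ Module.finrank ℂ 𝔥.toSubmodule := hdim
    omega
  have hspan : ∀ x ∈ Submodule.span ℂ {s}, x ≠ 0 →
      Submodule.span ℂ {s} = Submodule.span ℂ {x} := by
    intro x hx hx0
    obtain ⟨c, rfl⟩ := Submodule.mem_span_singleton.mp hx
    have hc : c ≠ 0 := by rintro rfl; simp at hx0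
    exact (Submodule.span_singleton_smul_eq hc.isUnit s).symm
  have htα := cartanEquivDual_symm_mem_bracketSpan H α
  have hsα := hspan _ (hle α hα htα) (hne α hα0)
  have hseq : Submodule.span ℂ {s} =
      bracketSpan (rootSpace H α).toSubmodule (rootSpace H (-α)).toSubmodule := by
    refine le_antisymm ?_ (hle α hα)
    rw [hsα, Submodule.span_singleton_le_iff_mem]
    exact htα
  have hS : ∀ β : Weight ℂ H L, β.IsNonZero → rootSpace H β ≤ N → β = -α ∨ β = α := by
    intro β hβ0 hβ
    have h1 := hle β hβ (cartanEquivDual_symm_mem_bracketSpan H β)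
    rw [hsα] at h1
    obtain ⟨k, hk⟩ := Submodule.mem_span_singleton.mp h1
    have h2 : k • (cartanEquivDual H).symm α.toLinear = (cartanEquivDual H).symm β.toLinear :=
      Subtype.ext hk
    rw [← map_smul, LinearEquiv.injective _ |>.eq_iff] at h2
    exact eq_neg_or_eq_of_eq_smul α β hβ0 k (by ext x; exact (LinearMap.congr_fun h2 x).symm)
  have hs𝔥 : Submodule.span ℂ {s} ≤ 𝔥.toSubmodule := h𝔥𝔱 ▸ inf_le_left
  have hup : ∀ P : LieSubmodule ℂ H L, Submodule.span ℂ {s} ≤ P.toSubmodule →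
      (∀ β : Weight ℂ H L, β.IsNonZero → rootSpace H β ≤ N → rootSpace H β ≤ P) →
      𝔥.toSubmodule ≤ P.toSubmodule := by
    intro P hsP hP
    have h1 : N ≤ P := by
      refine (le_sup_iSup_rootSpace H N).trans (sup_le ?_ (iSup₂_le fun β hβ ↦ hP β hβ.1 hβ.2))
      intro x hx
      exact hsP (h𝔥𝔱 ▸ hx)
    exact h1
  -- `ℂs = 𝔥 ∩ H` as an `H`-module.
  let C : LieSubmodule ℂ H L := N ⊓ H.toLieSubmodule
  have hC : C.toSubmodule = Submodule.span ℂ {s} := h𝔥𝔱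
  refine ⟨α, fun h ↦ hα0 h, α.genWeightSpace_ne_bot, hseq, ?_⟩
  rw [← hseq]
  by_cases hneg : rootSpace H (-α) ≤ N
  · refine Or.inr (Or.inr (le_antisymm ?_ (sup_le (sup_le hs𝔥 hα) hneg)))
    have := hup (C ⊔ rootSpace H α ⊔ rootSpace H (-α))
      (by rw [← hC]; exact le_sup_of_le_left (le_sup_left (a := C))) ?_
    · simpa only [LieSubmodule.sup_toSubmodule, hC] using this
    · intro β hβ0 hβ
      rcases hS β hβ0 hβ with rfl | rfl
      · exact le_sup_right
      · exact le_sup_of_le_left le_sup_right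
  · refine Or.inl (le_antisymm ?_ (sup_le hs𝔥 hα))
    have := hup (C ⊔ rootSpace H α) (by rw [← hC]; exact le_sup_left (a := C)) ?_
    · simpa only [LieSubmodule.sup_toSubmodule, hC] using this
    · intro β hβ0 hβ
      rcases hS β hβ0 hβ with rfl | rfl
      · exact absurd hβ hneg
      · exact le_sup_right
end
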